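/- Let α > 0, let M_j be the α-branching number of (b̄^j, k̄^j, γ̄^j) for 1 ≤ j ≤ N, and let M = max_{1 ≤ j ≤ N} M_j. If M < ∞, then lim_{k→∞} (1/k) · log p(⌊αk⌋, k) = −M. -/

import Mathlib

/-!
Write `x = b - α k` and let `c_i = b_i - α k_i` be the drift of an index `i`. Exponential rates
are identified by comparing `p` with explicit super- and subsolutions of the recurrence.

*Upper bound.* Fix a single term `j` with maximal branching number `M`. Lagrangian duality for the
relative-entropy program shows that for every `m < M` there is `l ≥ 0` with
`∑ γ_i exp (m k_i - l c_i) ≤ 1` (`RB.exists_multiplier`). Hence a constant multiple of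
`exp (-m k + l x)` is a supersolution of the `j`-th recurrence, so it dominates `p`
(`RB.upper_bound`), and `x ≤ 0` at `b = ⌊α k⌋`.

*Lower bound.* For `m > M` the function `exp (-m k) * profile a T x` is a subsolution of all the
recurrences simultaneously. Here `profile` vanishes for `x ≤ -1`, is at most `1`, and has a
slowly varying logarithmic slope `l ≥ 0`. If `q` is feasible with relative entropy below `m`
times its mean of `k`, then Jensen's inequality gives `∑ γ_i exp (m k_i - l c_i) > 1` for every
`l ≥ 0`, because the `q`-mean of the drift is nonpositive; the strict gap absorbs the variation of
the slope. Near the cut-off at `-1`, where some indices lead out of the support, the slope is large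
and a single index with `c_i < 0` is enough; if there is none, `q` is carried by indices with
`c_i = 0`, which do not move `x` (`RB.profile_step`).
-/

open scoped Classical

noncomputable section

namespace RB

abbrev X (N : ℕ) (r : Fin N → ℕ) : Type := (j : Fin N) × Fin (r j)

variable {N : ℕ} {r : Fin N → ℕ}

/-- Kullback-Leibler divergence (with the convention `0 · log 0 = 0`,
which holds automatically since `Real.log 0 = 0`). -/
def KL {ρ : ℕ} (q g : Fin ρ → ℝ) : ℝ := ∑ i, q i * Real.log (q i / g i)

/-- the set of values of the `α`-branching optimization problem for the triple
`(bv, kv, g)`; its infimum is the `α`-branching number. -/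
def BrSet (α : ℝ) {ρ : ℕ} (bv kv : Fin ρ → ℕ) (g : Fin ρ → ℝ) : Set ℝ :=
  {x | ∃ q : Fin ρ → ℝ, (∀ i, 0 ≤ q i) ∧ (∑ i, q i = 1) ∧
        (∑ i, q i * (bv i : ℝ)) ≤ α * ∑ i, q i * (kv i : ℝ) ∧
        x = KL q g / ∑ i, q i * (kv i : ℝ)}

end RB

open Filter Topology

namespace RB

/-! ### Gibbs-type inequalities and the feasible set -/

/-- Termwise Gibbs inequality. Summing it against a probability vector `q` plays the role of
Jensen's inequality for `exp`. -/
lemma gibbs_term {q g : ℝ} (s : ℝ) (hq : 0 ≤ q) (hg : 0 < g) :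
    q * (1 + s - Real.log (q / g)) ≤ g * Real.exp s := by
  rcases hq.eq_or_lt with rfl | hq
  · simp only [zero_mul]; positivity
  · have h1 := Real.add_one_le_exp (s - Real.log (q / g))
    have h2 : q * Real.exp (s - Real.log (q / g)) = g * Real.exp s := by
      rw [Real.exp_sub, Real.exp_log (by positivity)]
      field_simp
    rw [← h2]
    exact mul_le_mul_of_nonneg_left (by linarith) hq.le

variable {ρ : ℕ} {α : ℝ} {bv kv : Fin ρ → ℕ} {g : Fin ρ → ℝ}

lemma KL_nonneg {q : Fin ρ → ℝ} (hg : ∀ i, 0 < g i) (hgs : ∑ i, g i = 1)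
    (hq : ∀ i, 0 ≤ q i) (hqs : ∑ i, q i = 1) : 0 ≤ KL q g := by
  have h : ∑ i, q i * (1 + 0 - Real.log (q i / g i)) ≤ ∑ i, g i * Real.exp 0 :=
    Finset.sum_le_sum fun i _ => gibbs_term 0 (hq i) (hg i)
  simp only [add_zero, Real.exp_zero, mul_one, mul_sub, Finset.sum_sub_distrib, hgs, hqs] at h
  unfold KL
  linarith

/-- On the feasible set the denominator is positive, because every `bv i` is at least `1`. -/
lemma denom_pos (hα : 0 < α) (hb : ∀ i, 1 ≤ bv i) {q : Fin ρ → ℝ}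
    (hq : ∀ i, 0 ≤ q i) (hqs : ∑ i, q i = 1)
    (hf : (∑ i, q i * (bv i : ℝ)) ≤ α * ∑ i, q i * (kv i : ℝ)) :
    0 < ∑ i, q i * (kv i : ℝ) := by
  have h : ∑ i, q i ≤ ∑ i, q i * (bv i : ℝ) := Finset.sum_le_sum fun i _ =>
    le_mul_of_one_le_right (hq i) (by exact_mod_cast hb i)
  exact pos_of_mul_pos_right (by linarith : 0 < α * ∑ i, q i * (kv i : ℝ)) hα.le

lemma bddBelow_BrSet (hg : ∀ i, 0 < g i) (hgs : ∑ i, g i = 1) : BddBelow (BrSet α bv kv g) := by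
  refine ⟨0, ?_⟩
  rintro _ ⟨q, hq, hqs, -, rfl⟩
  exact div_nonneg (KL_nonneg hg hgs hq hqs)
    (Finset.sum_nonneg fun i _ => mul_nonneg (hq i) (Nat.cast_nonneg _))

/-- The feasibility constraint says that `bv i - α * kv i` has nonpositive `q`-mean. -/
lemma feas_iff (q : Fin ρ → ℝ) :
    (∑ i, q i * (bv i : ℝ)) ≤ α * ∑ i, q i * (kv i : ℝ) ↔
      ∑ i, q i * ((bv i : ℝ) - α * kv i) ≤ 0 := by
  have : ∑ i, q i * ((bv i : ℝ) - α * kv i)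
      = (∑ i, q i * (bv i : ℝ)) - α * ∑ i, q i * (kv i : ℝ) := by
    rw [Finset.mul_sum, ← Finset.sum_sub_distrib]
    exact Finset.sum_congr rfl fun i _ => by ring
  rw [this, sub_nonpos]

/-! ### Duality and the upper bound -/

/-- Complementary slackness: exponentially tilted weights `v` (possibly restricted to a subset of
the indices) whose normalization is feasible and has `l` times its drift zero must have total mass
less than `1` when `m` lies below the branching number. -/
lemma tilted_sum_lt_one (hα : 0 < α) (hb : ∀ i, 1 ≤ bv i) (hg : ∀ i, 0 < g i)
    (hgs : ∑ i, g i = 1) {m l : ℝ} (hm : m < sInf (BrSet α bv kv g)) (v : Fin ρ → ℝ)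
    (hv : ∀ i, v i = 0 ∨ v i = g i * Real.exp (m * kv i - l * ((bv i : ℝ) - α * kv i)))
    (hZ : 0 < ∑ i, v i) (hd : ∑ i, v i * ((bv i : ℝ) - α * kv i) ≤ 0)
    (hl : l * ∑ i, v i * ((bv i : ℝ) - α * kv i) = 0) :
    ∑ i, v i < 1 := by
  set Z := ∑ i, v i with hZdef
  have hv0 : ∀ i, 0 ≤ v i := fun i => by
    rcases hv i with h | h <;> rw [h]
    exact mul_nonneg (hg i).le (Real.exp_pos _).le
  have hq : ∀ i, 0 ≤ v i / Z := fun i => div_nonneg (hv0 i) hZ.le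
  have hqs : ∑ i, v i / Z = 1 := by rw [← Finset.sum_div, div_self hZ.ne']
  have hdq : ∑ i, v i / Z * ((bv i : ℝ) - α * kv i)
      = (∑ i, v i * ((bv i : ℝ) - α * kv i)) / Z := by
    rw [Finset.sum_div]; exact Finset.sum_congr rfl fun i _ => by ring
  have hf := (feas_iff (α := α) (bv := bv) (kv := kv) (fun i => v i / Z)).2
    (by rw [hdq]; exact div_nonpos_of_nonpos_of_nonneg hd hZ.le)
  have hden := denom_pos hα hb hq hqs hf
  have hle : sInf (BrSet α bv kv g) ≤ KL (fun i => v i / Z) g / ∑ i, v i / Z * (kv i : ℝ) :=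
    csInf_le (bddBelow_BrSet hg hgs) ⟨_, hq, hqs, hf, rfl⟩
  have hKL : KL (fun i => v i / Z) g = m * (∑ i, v i / Z * (kv i : ℝ)) - Real.log Z := by
    have h1 : ∀ i, v i / Z * Real.log (v i / Z / g i)
        = m * (v i / Z * (kv i : ℝ)) - l * (v i / Z * ((bv i : ℝ) - α * kv i))
          - v i / Z * Real.log Z := by
      intro i
      rcases hv i with h | h
      · simp [h]
      · have : v i / Z / g i
            = Real.exp (m * kv i - l * ((bv i : ℝ) - α * kv i)) / Z := by
          rw [h]; field_simp [(hg i).ne']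
        rw [this, Real.log_div (Real.exp_pos _).ne' hZ.ne', Real.log_exp]
        ring
    unfold KL
    simp only [h1, Finset.sum_sub_distrib, ← Finset.mul_sum, ← Finset.sum_mul, hqs]
    rw [hdq, mul_div_assoc', hl]
    ring
  rw [hKL, le_div_iff₀ hden] at hle
  have : Real.log Z < 0 := by nlinarith
  exact (Real.log_neg_iff hZ).1 this

/-- Lagrangian duality: below the branching number there is a multiplier `l ≥ 0` for which the
exponential moment of the step is at most `1`. -/
lemma exists_multiplier (hα : 0 < α) (hb : ∀ i, 1 ≤ bv i) (hg : ∀ i, 0 < g i)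
    (hgs : ∑ i, g i = 1) (hne : (BrSet α bv kv g).Nonempty) {m : ℝ}
    (hm : m < sInf (BrSet α bv kv g)) :
    ∃ l : ℝ, 0 ≤ l ∧ ∑ i, g i * Real.exp (m * kv i - l * ((bv i : ℝ) - α * kv i)) ≤ 1 := by
  set c : Fin ρ → ℝ := fun i => (bv i : ℝ) - α * kv i with hc
  set φ : ℝ → ℝ := fun l => ∑ i, g i * Real.exp (m * kv i - l * c i) with hφ
  by_cases hA : ∃ i, c i < 0
  · -- `φ` is coercive on `[0, ∞)`: minimize it and use the first-order conditions.
    obtain ⟨i₀, hi₀⟩ := hA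
    have hcont : Continuous φ := by fun_prop
    have hterm : ∀ i l, 0 < g i * Real.exp (m * kv i - l * c i) := fun i l =>
      mul_pos (hg i) (Real.exp_pos _)
    have htop : Tendsto φ atTop atTop := by
      have h1 : Tendsto (fun l : ℝ => g i₀ * Real.exp (m * kv i₀ - l * c i₀)) atTop atTop := by
        refine Tendsto.const_mul_atTop (hg i₀) (Real.tendsto_exp_atTop.comp ?_)
        have : Tendsto (fun l : ℝ => m * kv i₀ + l * (-c i₀)) atTop atTop :=
          tendsto_atTop_add_const_left _ _ (tendsto_id.atTop_mul_const (neg_pos.2 hi₀))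
        exact this.congr fun l => by ring
      exact tendsto_atTop_mono (fun l => Finset.single_le_sum
        (f := fun i => g i * Real.exp (m * kv i - l * c i))
        (fun i _ => (hterm i l).le) (Finset.mem_univ i₀)) h1
    obtain ⟨R, hR⟩ := (htop.eventually_ge_atTop (φ 0)).exists_forall_of_atTop
    obtain ⟨l, hl, hmin'⟩ := (isCompact_Icc (a := (0 : ℝ)) (b := max R 0)).exists_isMinOn
      ⟨0, le_refl _, le_max_right _ _⟩ hcont.continuousOn
    have hmin : ∀ y, 0 ≤ y → φ l ≤ φ y := by
      intro y hy
      rcases le_total y (max R 0) with h | h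
      · exact hmin' ⟨hy, h⟩
      · exact (hmin' (⟨le_refl _, le_max_right _ _⟩ : (0 : ℝ) ∈ Set.Icc 0 (max R 0))).trans
          (hR y ((le_max_left _ _).trans h))
    have hder : HasDerivAt φ (∑ i, -(g i * Real.exp (m * kv i - l * c i) * c i)) l := by
      refine HasDerivAt.fun_sum fun i _ => ?_
      have := ((((hasDerivAt_id l).mul_const (c i)).const_sub (m * kv i)).exp).const_mul (g i)
      refine this.congr_deriv ?_
      simp only [id]; ring
    rw [Finset.sum_neg_distrib] at hder
    set D := ∑ i, g i * Real.exp (m * kv i - l * c i) * c i with hD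
    have hD0 : D ≤ 0 := by
      have h1 : Tendsto (slope φ l) (𝓝[>] l) (𝓝 (-D)) :=
        (hasDerivAt_iff_tendsto_slope.1 hder).mono_left
          (nhdsWithin_mono _ fun x hx => ne_of_gt hx)
      have h2 : 0 ≤ -D := by
        refine ge_of_tendsto h1 ?_
        filter_upwards [self_mem_nhdsWithin] with y hy
        rw [slope_def_field]
        exact div_nonneg (sub_nonneg.2 (hmin y (hl.1.trans (le_of_lt hy))))
          (sub_nonneg.2 (le_of_lt hy))
      linarith
    have hlD : l * D = 0 := by
      rcases hl.1.eq_or_lt with h | h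
      · rw [← h, zero_mul]
      · have hloc : IsLocalMin φ l := by
          filter_upwards [lt_mem_nhds h] with y hy using hmin y hy.le
        have := hloc.hasDerivAt_eq_zero hder
        rw [neg_eq_zero.1 this, mul_zero]
    exact ⟨l, hl.1, (tilted_sum_lt_one hα hb hg hgs hm _ (fun i => Or.inr rfl)
      (Finset.sum_pos (fun i _ => hterm i l) ⟨i₀, Finset.mem_univ _⟩) hD0 hlD).le⟩
  · -- All drifts are nonnegative: `φ l` decreases to the mass of the zero-drift indices.
    push Not at hA
    set v : Fin ρ → ℝ := fun i => if c i = 0 then g i * Real.exp (m * kv i) else 0 with hv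
    have hlim : Tendsto φ atTop (𝓝 (∑ i, v i)) := by
      refine tendsto_finsetSum _ fun i _ => ?_
      by_cases h : c i = 0
      · simp [hv, h]
      · have hpos : 0 < c i := lt_of_le_of_ne (hA i) (Ne.symm h)
        have : Tendsto (fun l : ℝ => m * kv i - l * c i) atTop atBot := by
          simp only [sub_eq_add_neg]
          exact tendsto_atBot_add_const_left _ _
            (tendsto_neg_atTop_atBot.comp (tendsto_id.atTop_mul_const hpos))
        simpa [hv, h] using (Real.tendsto_exp_atBot.comp this).const_mul (g i)
    have hvc : ∀ i, v i * c i = 0 := fun i => by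
      by_cases h : c i = 0 <;> simp [hv, h]
    have hZ : 0 < ∑ i, v i := by
      obtain ⟨_, q, hq, hqs, hf, -⟩ := hne
      rw [feas_iff] at hf
      have h0 := (Finset.sum_eq_zero_iff_of_nonneg
        (fun i _ => mul_nonneg (hq i) (hA i))).1
        (le_antisymm hf (Finset.sum_nonneg fun i _ => mul_nonneg (hq i) (hA i)))
      have : ∃ i, q i ≠ 0 := by
        by_contra! h
        simp [h] at hqs
      obtain ⟨i, hi⟩ := this
      have hci : c i = 0 := (mul_eq_zero.1 (h0 i (Finset.mem_univ i))).resolve_left hi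
      refine Finset.sum_pos' (fun i _ => ?_) ⟨i, Finset.mem_univ i, ?_⟩
      · simp only [hv]; split_ifs
        · exact mul_nonneg (hg _).le (Real.exp_pos _).le
        · exact le_rfl
      · simp only [hv, hci, if_true]
        exact mul_pos (hg _) (Real.exp_pos _)
    have hlt : ∑ i, v i < 1 := by
      refine tilted_sum_lt_one (l := 0) hα hb hg hgs hm v (fun i => ?_) hZ ?_ (zero_mul _)
      · by_cases h : c i = 0 <;> simp [hv, h]
      · exact (Finset.sum_eq_zero fun i _ => hvc i).le
    obtain ⟨l, h1, h2⟩ :=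
      ((hlim.eventually (gt_mem_nhds hlt)).and (eventually_ge_atTop (0 : ℝ))).exists
    exact ⟨l, h2, h1.le⟩

/-- Exponential supersolution of a single recurrence. For the finitely many `k` at which the
term is not available, the trivial bound `p ≤ 1` is absorbed in the constant. -/
lemma upper_bound {p : ℤ → ℕ → ℝ} (hp1 : ∀ b k, p b k ≤ 1)
    (hpneg : ∀ b : ℤ, b < 0 → ∀ k : ℕ, p b k = 0)
    (hb : ∀ i, 1 ≤ bv i) (hg : ∀ i, 0 < g i)
    (hstep : ∀ b : ℤ, 0 ≤ b → ∀ k : ℕ, 1 ≤ k → (∀ i, kv i ≤ k) →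
      p b k ≤ ∑ i, g i * p (b - (bv i : ℤ)) (k - kv i))
    {l μ : ℝ} (hl : 0 ≤ l) (hs : ∑ i, g i * Real.exp (μ * kv i - l * bv i) ≤ 1)
    (b : ℤ) (k : ℕ) :
    p b k ≤ Real.exp (|μ| * ∑ i, (kv i : ℝ)) * Real.exp (l * b - μ * k) := by
  obtain ⟨n, hn⟩ : ∃ n : ℕ, b < n := ⟨b.toNat + 1, by omega⟩
  induction n generalizing b k with
  | zero => rw [hpneg b (by omega)]; positivity
  | succ n ih =>
    rcases lt_or_ge b 0 with hb0 | hb0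
    · rw [hpneg b hb0]; positivity
    by_cases hk : 1 ≤ k ∧ ∀ i, kv i ≤ k
    · refine (hstep b hb0 k hk.1 hk.2).trans ?_
      calc ∑ i, g i * p (b - (bv i : ℤ)) (k - kv i)
          ≤ ∑ i, g i * (Real.exp (|μ| * ∑ i, (kv i : ℝ)) *
              Real.exp (l * (b - (bv i : ℤ) : ℤ) - μ * (k - kv i : ℕ))) := by
            refine Finset.sum_le_sum fun i _ => mul_le_mul_of_nonneg_left ?_ (hg i).le
            have := hb i
            exact ih _ _ (by omega)
        _ = Real.exp (|μ| * ∑ i, (kv i : ℝ)) * Real.exp (l * b - μ * k) *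
              ∑ i, g i * Real.exp (μ * kv i - l * bv i) := by
            generalize Real.exp (|μ| * ∑ i, (kv i : ℝ)) = A
            rw [Finset.mul_sum]
            refine Finset.sum_congr rfl fun i _ => ?_
            have : l * ((b - (bv i : ℤ) : ℤ) : ℝ) - μ * ((k - kv i : ℕ) : ℝ)
                = (l * b - μ * k) + (μ * kv i - l * bv i) := by
              rw [Nat.cast_sub (hk.2 i)]; push_cast; ring
            rw [this, Real.exp_add]; ring
        _ ≤ _ := mul_le_of_le_one_right (by positivity) hs
    · have hkK : (k : ℝ) ≤ ∑ i, (kv i : ℝ) := by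
        have hk' : k ≤ ∑ i, kv i := by
          by_cases h1 : 1 ≤ k
          · have : ∃ i, k < kv i := by
              by_contra! h
              exact hk ⟨h1, h⟩
            obtain ⟨i, hi⟩ := this
            have h2 : kv i ≤ ∑ i, kv i := Finset.single_le_sum (f := kv)
              (fun _ _ => Nat.zero_le _) (Finset.mem_univ i)
            exact hi.le.trans h2
          · omega
        exact_mod_cast hk'
      refine (hp1 b k).trans ?_
      rw [← Real.exp_add]
      refine Real.one_le_exp ?_
      have h1 : 0 ≤ l * b := mul_nonneg hl (by exact_mod_cast hb0)
      have h2 : μ * k ≤ |μ| * k :=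
        mul_le_mul_of_nonneg_right (le_abs_self μ) (Nat.cast_nonneg _)
      have h3 := mul_le_mul_of_nonneg_left hkK (abs_nonneg μ)
      linarith

/-! ### The subsolution and the lower bound -/

/-- The profile of the subsolution in the variable `x = b - α * k`: it vanishes for `x ≤ -1`, is
log-concave and increasing on `(-1, T)`, and equals `1` from `T` on. Its logarithmic slope
`2 * a * max (T - x) 0` is large near `-1` and decreases slowly to `0`. The threshold is `-1`
rather than `0` so that the profile is positive at `x = ⌊α * k⌋ - α * k`. -/
def profile (a T x : ℝ) : ℝ := if -1 < x then Real.exp (-(a * (max (T - x) 0) ^ 2)) else 0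

lemma profile_nonneg (a T x : ℝ) : 0 ≤ profile a T x := by
  unfold profile; split_ifs
  · exact (Real.exp_pos _).le
  · exact le_rfl

lemma profile_le_one {a : ℝ} (ha : 0 ≤ a) (T x : ℝ) : profile a T x ≤ 1 := by
  unfold profile; split_ifs
  · exact Real.exp_le_one_iff.2 (by have := mul_nonneg ha (sq_nonneg (max (T - x) 0)); linarith)
  · exact zero_le_one

/-- Second-order expansion of the log-profile, whose slope is `2 * a`-Lipschitz. -/
lemma profile_shift {a T x c : ℝ} (ha : 0 ≤ a) (hxc : -1 < x - c) :
    profile a T x * Real.exp (-(2 * a * max (T - x) 0 * c) - a * c ^ 2)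
      ≤ profile a T (x - c) := by
  unfold profile
  rw [if_pos hxc]
  split_ifs
  · rw [← Real.exp_add]
    refine Real.exp_le_exp.2 ?_
    have key : (max (T - (x - c)) 0) ^ 2 ≤ (max (T - x) 0 + c) ^ 2 := by
      rcases le_total (T - x) 0 with h | h <;> rcases le_total (T - (x - c)) 0 with h' | h' <;>
        simp only [max_eq_left, max_eq_right, h, h'] <;> nlinarith
    nlinarith [mul_le_mul_of_nonneg_left key ha]
  · rw [zero_mul]; exact (Real.exp_pos _).le

/-- The step inequality for the profile, for all small `a` and then all large `T`.
Away from `-1` it follows from the Gibbs inequality at a nearly optimal `q`; near `-1` the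
logarithmic slope is so large that one index of negative drift suffices. When no such
index exists, `q` is carried by indices of zero drift and nothing moves. -/
lemma profile_step (hα : 0 < α) (hb : ∀ i, 1 ≤ bv i) (hg : ∀ i, 0 < g i)
    (hne : (BrSet α bv kv g).Nonempty) {m : ℝ}
    (hm : sInf (BrSet α bv kv g) < m) :
    ∀ᶠ a in 𝓝[>] (0 : ℝ), ∀ᶠ T in atTop, ∀ x : ℝ,
      profile a T x ≤
        ∑ i, g i * Real.exp (m * kv i) * profile a T (x - ((bv i : ℝ) - α * kv i)) := by
  obtain ⟨_, ⟨q, hq, hqs, hf, rfl⟩, hlt⟩ := exists_lt_of_csInf_lt hne hm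
  have hden := denom_pos hα hb hq hqs hf
  rw [div_lt_iff₀ hden] at hlt
  rw [feas_iff] at hf
  set c : Fin ρ → ℝ := fun i => (bv i : ℝ) - α * kv i with hc
  have hsum : ∑ i, q i * (1 + m * kv i - Real.log (q i / g i))
      = 1 + (m * (∑ i, q i * (kv i : ℝ)) - KL q g) := by
    have : ∀ i, q i * (1 + m * kv i - Real.log (q i / g i))
        = q i + m * (q i * (kv i : ℝ)) - q i * Real.log (q i / g i) := fun i => by ring
    simp only [this, Finset.sum_sub_distrib, Finset.sum_add_distrib, hqs, ← Finset.mul_sum, KL]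
    ring
  have hrhs : ∀ a T x, 0 ≤ ∑ i, g i * Real.exp (m * kv i) * profile a T (x - c i) :=
    fun a T x => Finset.sum_nonneg fun i _ =>
      mul_nonneg (mul_nonneg (hg i).le (Real.exp_pos _).le) (profile_nonneg _ _ _)
  by_cases hA : ∃ i, c i < 0
  · obtain ⟨i₀, hi₀⟩ := hA
    set C : ℝ := ∑ i, |c i| with hC
    have hcC : ∀ i, |c i| ≤ C := fun i =>
      Finset.single_le_sum (f := fun i => |c i|) (fun _ _ => abs_nonneg _) (Finset.mem_univ i)
    have hcC2 : ∀ i, c i ^ 2 ≤ C ^ 2 := fun i => by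
      rw [← sq_abs]; exact pow_le_pow_left₀ (abs_nonneg _) (hcC i) 2
    set δ : ℝ := m * (∑ i, q i * (kv i : ℝ)) - KL q g with hδ
    have hδ0 : 0 < δ := by linarith
    have hsmall : ∀ᶠ a in 𝓝[>] (0 : ℝ), a * C ^ 2 < δ := by
      have : Tendsto (fun a : ℝ => a * C ^ 2) (𝓝 0) (𝓝 (0 * C ^ 2)) :=
        (continuous_id.mul continuous_const).tendsto 0
      rw [zero_mul] at this
      exact (this.eventually (gt_mem_nhds hδ0)).filter_mono nhdsWithin_le_nhds
    filter_upwards [hsmall, self_mem_nhdsWithin] with a haC ha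
    have ha : 0 < a := ha
    have hTlim : Tendsto (fun T : ℝ => 2 * a * (T - C) * (-c i₀)) atTop atTop :=
      ((tendsto_atTop_add_const_right _ (-C) tendsto_id).const_mul_atTop
        (by positivity : 0 < 2 * a)).atTop_mul_const (neg_pos.2 hi₀)
    filter_upwards [hTlim.eventually_ge_atTop (a * C ^ 2 - m * kv i₀ - Real.log (g i₀))]
      with T hT x
    by_cases hx : -1 < x
    swap
    · rw [profile, if_neg hx]; exact hrhs a T x
    set l := 2 * a * max (T - x) 0 with hl
    have hl0 : 0 ≤ l := mul_nonneg (by positivity) (le_max_right _ _)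
    rcases lt_or_ge x C with hxC | hxC
    · have hlT : 2 * a * (T - C) ≤ l :=
        mul_le_mul_of_nonneg_left (le_max_of_le_left (by linarith)) (by positivity)
      have h1 : 1 ≤ g i₀ * Real.exp (m * kv i₀) *
          Real.exp (-(l * c i₀) - a * c i₀ ^ 2) := by
        have : g i₀ * Real.exp (m * kv i₀) * Real.exp (-(l * c i₀) - a * c i₀ ^ 2)
            = Real.exp (Real.log (g i₀) + m * kv i₀ + (-(l * c i₀) - a * c i₀ ^ 2)) := by
          rw [Real.exp_add, Real.exp_add, Real.exp_log (hg i₀)]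
        rw [this]
        refine Real.one_le_exp ?_
        have h2 := mul_le_mul_of_nonneg_right hlT (neg_pos.2 hi₀).le
        have h3 := mul_le_mul_of_nonneg_left (hcC2 i₀) ha.le
        linarith
      calc profile a T x
          ≤ profile a T x * (g i₀ * Real.exp (m * kv i₀) *
              Real.exp (-(l * c i₀) - a * c i₀ ^ 2)) :=
            le_mul_of_one_le_right (profile_nonneg _ _ _) h1
        _ = g i₀ * Real.exp (m * kv i₀) *
              (profile a T x * Real.exp (-(l * c i₀) - a * c i₀ ^ 2)) := by ring
        _ ≤ g i₀ * Real.exp (m * kv i₀) * profile a T (x - c i₀) :=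
            mul_le_mul_of_nonneg_left (profile_shift ha.le (by linarith))
              (mul_nonneg (hg i₀).le (Real.exp_pos _).le)
        _ ≤ _ := Finset.single_le_sum
            (f := fun i => g i * Real.exp (m * kv i) * profile a T (x - c i))
            (fun i _ => mul_nonneg (mul_nonneg (hg i).le (Real.exp_pos _).le)
              (profile_nonneg _ _ _)) (Finset.mem_univ i₀)
    · have hterm : ∀ i, profile a T x *
          (q i * (1 + m * kv i - Real.log (q i / g i)) - l * (q i * c i) - q i * (a * C ^ 2))
          ≤ g i * Real.exp (m * kv i) * profile a T (x - c i) := by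
        intro i
        have h0 : q i * (1 + m * kv i - Real.log (q i / g i)) - l * (q i * c i)
            - q i * (a * C ^ 2)
            ≤ q i * (1 + (m * kv i + (-(l * c i) - a * c i ^ 2)) - Real.log (q i / g i)) := by
          have := mul_le_mul_of_nonneg_left
            (mul_le_mul_of_nonneg_left (hcC2 i) ha.le) (hq i)
          linarith
        have h1 := h0.trans (gibbs_term _ (hq i) (hg i))
        rw [Real.exp_add] at h1
        calc _ ≤ profile a T x * (g i * (Real.exp (m * kv i) *
                Real.exp (-(l * c i) - a * c i ^ 2))) :=
              mul_le_mul_of_nonneg_left h1 (profile_nonneg _ _ _)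
          _ = g i * Real.exp (m * kv i) *
                (profile a T x * Real.exp (-(l * c i) - a * c i ^ 2)) := by ring
          _ ≤ _ := mul_le_mul_of_nonneg_left
              (profile_shift ha.le (by linarith [le_abs_self (c i), hcC i]))
              (mul_nonneg (hg i).le (Real.exp_pos _).le)
      refine le_trans ?_ (Finset.sum_le_sum fun i _ => hterm i)
      rw [← Finset.mul_sum, Finset.sum_sub_distrib, Finset.sum_sub_distrib, hsum,
        ← Finset.mul_sum, ← Finset.sum_mul, hqs]
      refine le_mul_of_one_le_right (profile_nonneg _ _ _) ?_
      have := mul_nonneg hl0 (neg_nonneg.2 hf)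
      linarith
  · push Not at hA
    have h0 := (Finset.sum_eq_zero_iff_of_nonneg
      (fun i _ => mul_nonneg (hq i) (hA i))).1
      (le_antisymm hf (Finset.sum_nonneg fun i _ => mul_nonneg (hq i) (hA i)))
    refine Eventually.of_forall fun a => Eventually.of_forall fun T x => ?_
    have hterm : ∀ i, profile a T x * (q i * (1 + m * kv i - Real.log (q i / g i)))
        ≤ g i * Real.exp (m * kv i) * profile a T (x - c i) := by
      intro i
      rcases mul_eq_zero.1 (h0 i (Finset.mem_univ i)) with h | h
      · rw [h, zero_mul, mul_zero]
        exact mul_nonneg (mul_nonneg (hg i).le (Real.exp_pos _).le) (profile_nonneg _ _ _)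
      · change c i = 0 at h
        rw [h, sub_zero, mul_comm]
        exact mul_le_mul_of_nonneg_right (gibbs_term _ (hq i) (hg i)) (profile_nonneg _ _ _)
    refine le_trans ?_ (Finset.sum_le_sum fun i _ => hterm i)
    rw [← Finset.mul_sum, hsum]
    exact le_mul_of_one_le_right (profile_nonneg _ _ _) (by linarith)

end RB

/-- Theorem 2 of the paper.  `p` is the composite recurrence of
`{(b̄ʲ, k̄ʲ, γ̄ʲ)}`; the hypothesis that every feasible set of the `α`-branching
optimization problems is nonempty is exactly the condition `M < ∞`, where
`M = max_j M_j` and `M_j = sInf (BrSet α (b̄ʲ) (k̄ʲ) (γ̄ʲ))` is the `α`-branching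
number of the `j`-th term.  The conclusion is
`lim_{k→∞} (1/k) log p(⌊αk⌋, k) = -M`. -/
theorem stmt_0
    (N : ℕ) (hN : 1 ≤ N) (r : Fin N → ℕ) (hr : ∀ j, 1 ≤ r j)
    (bb kb : (j : Fin N) → Fin (r j) → ℕ)
    (hbb : ∀ j i, 1 ≤ bb j i)
    (γ : (j : Fin N) → Fin (r j) → ℝ)
    (hγpos : ∀ j i, 0 < γ j i) (hγsum : ∀ j, ∑ i, γ j i = 1)
    (hks : ∃ j, ∀ i, kb j i ≤ 1)
    (p : ℤ → ℕ → ℝ)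
    (hp01 : ∀ bz k, p bz k ∈ Set.Icc (0 : ℝ) 1)
    (hpneg : ∀ bz : ℤ, bz < 0 → ∀ k : ℕ, p bz k = 0)
    (hpzero : ∀ bz : ℤ, 0 ≤ bz → p bz 0 = 1)
    (hprec : ∀ bz : ℤ, 0 ≤ bz → ∀ k : ℕ, 1 ≤ k →
      p bz k = sInf {x | ∃ j : Fin N, (∀ i, kb j i ≤ k) ∧
        x = ∑ i, γ j i * p (bz - (bb j i : ℤ)) (k - kb j i)})
    (α : ℝ) (hα : 0 < α)
    (hfeas : ∀ j, (RB.BrSet α (bb j) (kb j) (γ j)).Nonempty) :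
    Filter.Tendsto (fun k : ℕ => Real.log (p ⌊α * (k : ℝ)⌋ k) / (k : ℝ))
      Filter.atTop
      (nhds (-(⨆ j, sInf (RB.BrSet α (bb j) (kb j) (γ j))))) := by
  
  set Mj : Fin N → ℝ := fun j => sInf (RB.BrSet α (bb j) (kb j) (γ j)) with hMj
  have : Nonempty (Fin N) := ⟨⟨0, hN⟩⟩
  obtain ⟨j₀, hj₀⟩ := exists_eq_ciSup_of_finite (f := Mj)
  have hjle : ∀ j, Mj j ≤ ⨆ j, Mj j := fun j => le_ciSup (Set.finite_range Mj).bddAbove j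
  set M := ⨆ j, Mj j with hM
  have hlower : ∀ m, M < m → ∃ K : ℝ, 0 < K ∧
      ∀ k : ℕ, K * Real.exp (-(m * k)) ≤ p ⌊α * (k : ℝ)⌋ k := by
    intro m hm
    have hall := Filter.eventually_all.2 fun j => RB.profile_step hα (hbb j) (hγpos j) (hfeas j)
      ((hjle j).trans_lt hm)
    obtain ⟨a, ha, ha0⟩ := (hall.and self_mem_nhdsWithin).exists
    have ha0 : 0 < a := ha0
    obtain ⟨T, hT⟩ := (Filter.eventually_all.2 ha).exists
    have hsub : ∀ (n : ℕ) (b : ℤ) (k : ℕ), b < n →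
        Real.exp (-(m * k)) * RB.profile a T (b - α * k) ≤ p b k := by
      intro n
      have hneg : ∀ (b : ℤ) (k : ℕ), b < 0 →
          Real.exp (-(m * k)) * RB.profile a T (b - α * k) ≤ p b k := by
        intro b k hb
        have hb' : (b : ℝ) ≤ -1 := by exact_mod_cast (by omega : b ≤ -1)
        have : ¬ (-1 < (b : ℝ) - α * k) := by
          have : 0 ≤ α * (k : ℝ) := by positivity
          linarith
        rw [RB.profile, if_neg this, hpneg b hb, mul_zero]
      induction n with
      | zero => intro b k hb; exact hneg b k (by omega)
      | succ n ih =>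
        intro b k hbn
        rcases lt_or_ge b 0 with hb | hb
        · exact hneg b k hb
        rcases Nat.eq_zero_or_pos k with rfl | hk
        · rw [hpzero b hb]
          simpa using RB.profile_le_one ha0.le T _
        rw [hprec b hb k hk]
        refine le_csInf ?_ ?_
        · obtain ⟨j, hj⟩ := hks
          exact ⟨_, j, fun i => (hj i).trans hk, rfl⟩
        rintro _ ⟨j, hj, rfl⟩
        calc Real.exp (-(m * k)) * RB.profile a T (b - α * k)
            ≤ Real.exp (-(m * k)) * ∑ i, γ j i * Real.exp (m * kb j i) *
                RB.profile a T (b - α * k - ((bb j i : ℝ) - α * kb j i)) :=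
              mul_le_mul_of_nonneg_left (hT j _) (Real.exp_pos _).le
          _ = ∑ i, γ j i * (Real.exp (-(m * (k - kb j i : ℕ))) *
                RB.profile a T ((b - (bb j i : ℤ) : ℤ) - α * (k - kb j i : ℕ))) := by
              rw [Finset.mul_sum]
              refine Finset.sum_congr rfl fun i _ => ?_
              have h1 : -(m * ((k - kb j i : ℕ) : ℝ)) = -(m * k) + m * kb j i := by
                rw [Nat.cast_sub (hj i)]; ring
              have h2 : ((b - (bb j i : ℤ) : ℤ) : ℝ) - α * ((k - kb j i : ℕ) : ℝ)
                  = b - α * k - ((bb j i : ℝ) - α * kb j i) := by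
                rw [Nat.cast_sub (hj i)]; push_cast; ring
              rw [h1, h2, Real.exp_add]; ring
          _ ≤ _ := by
              refine Finset.sum_le_sum fun i _ => mul_le_mul_of_nonneg_left ?_ (hγpos j i).le
              have := hbb j i
              exact ih _ _ (by omega)
    refine ⟨Real.exp (-(a * (max (T + 1) 0) ^ 2)), Real.exp_pos _, fun k => ?_⟩
    refine le_trans ?_ (hsub (⌊α * (k : ℝ)⌋.toNat + 1) ⌊α * (k : ℝ)⌋ k (by omega))
    rw [mul_comm]
    refine mul_le_mul_of_nonneg_left ?_ (Real.exp_pos _).le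
    have hfl := Int.lt_floor_add_one (α * (k : ℝ))
    rw [RB.profile, if_pos (by linarith)]
    refine Real.exp_le_exp.2 (neg_le_neg (mul_le_mul_of_nonneg_left ?_ ha0.le))
    exact pow_le_pow_left₀ (le_max_right _ _) (max_le_max (by linarith) le_rfl) 2
  have hupper : ∀ m, m < M → ∃ K : ℝ, 0 < K ∧
      ∀ k : ℕ, p ⌊α * (k : ℝ)⌋ k ≤ K * Real.exp (-(m * k)) := by
    intro m hm
    rw [← hj₀] at hm
    obtain ⟨l, hl, hs⟩ :=
      RB.exists_multiplier hα (hbb j₀) (hγpos j₀) (hγsum j₀) (hfeas j₀) hm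
    have hs' : ∑ i, γ j₀ i * Real.exp ((m + l * α) * kb j₀ i - l * bb j₀ i) ≤ 1 := by
      refine le_trans (le_of_eq (Finset.sum_congr rfl fun i _ => ?_)) hs
      congr 2; ring
    refine ⟨Real.exp (|m + l * α| * ∑ i, (kb j₀ i : ℝ)), Real.exp_pos _, fun k => ?_⟩
    refine (RB.upper_bound (fun b k => (hp01 b k).2) hpneg (hbb j₀) (hγpos j₀) ?_ hl hs'
      ⌊α * (k : ℝ)⌋ k).trans ?_
    · intro b hb k hk hkk
      rw [hprec b hb k hk]
      refine csInf_le ⟨0, ?_⟩ ⟨j₀, hkk, rfl⟩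
      rintro _ ⟨j, -, rfl⟩
      exact Finset.sum_nonneg fun i _ => mul_nonneg (hγpos j i).le (hp01 _ _).1
    · refine mul_le_mul_of_nonneg_left (Real.exp_le_exp.2 ?_) (Real.exp_pos _).le
      have := mul_le_mul_of_nonneg_left (Int.floor_le (α * (k : ℝ))) hl
      linarith
  have hppos : ∀ k : ℕ, 0 < p ⌊α * (k : ℝ)⌋ k := fun k => by
    obtain ⟨K, hK, h⟩ := hlower (M + 1) (by linarith)
    exact (mul_pos hK (Real.exp_pos _)).trans_le (h k)
  -- A multiplicative constant does not affect the exponential rate.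
  have hrate : ∀ m K : ℝ, Tendsto (fun k : ℕ => Real.log K / (k : ℝ) - m) atTop (𝓝 (-m)) := by
    intro m K
    simpa using (tendsto_const_div_atTop_nhds_zero_nat (Real.log K)).sub_const m
  have hlogK : ∀ (m K : ℝ) (k : ℕ), 0 < K → 1 ≤ k →
      Real.log (K * Real.exp (-(m * k))) / (k : ℝ) = Real.log K / (k : ℝ) - m := by
    intro m K k hK hk
    have hk0 : (k : ℝ) ≠ 0 := by positivity
    rw [Real.log_mul hK.ne' (Real.exp_pos _).ne', Real.log_exp]
    field_simp
    ring
  refine tendsto_order.2 ⟨fun x hx => ?_, fun x hx => ?_⟩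
  · obtain ⟨m, hm1, hm2⟩ := exists_between (lt_neg.1 hx)
    obtain ⟨K, hK, h⟩ := hlower m hm1
    filter_upwards [(hrate m K).eventually (lt_mem_nhds (lt_neg.1 hm2)), eventually_ge_atTop 1]
      with k hk hk1
    refine hk.trans_le ?_
    rw [← hlogK m K k hK hk1]
    exact div_le_div_of_nonneg_right
      (Real.log_le_log (mul_pos hK (Real.exp_pos _)) (h k)) (Nat.cast_nonneg _)
  · obtain ⟨m, hm1, hm2⟩ := exists_between (neg_lt.1 hx)
    obtain ⟨K, hK, h⟩ := hupper m hm2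
    filter_upwards [(hrate m K).eventually (gt_mem_nhds (neg_lt.1 hm1)), eventually_ge_atTop 1]
      with k hk hk1
    refine lt_of_le_of_lt ?_ hk
    rw [← hlogK m K k hK hk1]
    exact div_le_div_of_nonneg_right
      (Real.log_le_log (hppos k) (h k)) (Nat.cast_nonneg _)
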